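/- Let R be a 3-torsion free prime alternative ring containing a nontrivial idempotent e₁. Then every Lie triple derivable map D : R → R is almost additive: for all a, b ∈ R there exists z ∈ Z(R) (depending on a and b) such that D(a + b) = D(a) + D(b) + z. -/

import Mathlib

/-- The Lie bracket (commutator) in a not-necessarily-associative ring. -/
def lieBr {R : Type*} [NonUnitalNonAssocRing R] (x y : R) : R := x * y - y * x

/-- `R` is an alternative ring: `(x*x)*y = x*(x*y)` and `(y*x)*x = y*(x*x)`. -/
def IsAlternative (R : Type*) [NonUnitalNonAssocRing R] : Prop :=
  (∀ x y : R, x * x * y = x * (x * y)) ∧ (∀ x y : R, y * x * x = y * (x * x))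

/-- The centre of a not-necessarily-associative ring: elements `r` whose associators
`(r,x,y)`, `(x,r,y)`, `(x,y,r)` all vanish and which commute with everything. -/
def ringCenter (R : Type*) [NonUnitalNonAssocRing R] : Set R :=
  {r | (∀ x y : R, r * x * y = r * (x * y)) ∧ (∀ x y : R, x * r * y = x * (r * y)) ∧
       (∀ x y : R, x * y * r = x * (y * r)) ∧ (∀ x : R, r * x = x * r)}

/-- `e` is a nontrivial idempotent: idempotent, nonzero and not a multiplicative identity. -/
def IsNontrivialIdempotent {R : Type*} [NonUnitalNonAssocRing R] (e : R) : Prop :=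
  e * e = e ∧ e ≠ 0 ∧ ¬ (∀ x : R, e * x = x ∧ x * e = x)

/-- Peirce component `R₁₁` relative to the idempotent `e`. -/
def peirce11 {R : Type*} [NonUnitalNonAssocRing R] (e : R) : Set R :=
  {x | e * x = x ∧ x * e = x}

/-- Peirce component `R₁₂` relative to the idempotent `e`. -/
def peirce12 {R : Type*} [NonUnitalNonAssocRing R] (e : R) : Set R :=
  {x | e * x = x ∧ x * e = 0}

/-- Peirce component `R₂₁` relative to the idempotent `e`. -/
def peirce21 {R : Type*} [NonUnitalNonAssocRing R] (e : R) : Set R :=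
  {x | e * x = 0 ∧ x * e = x}

/-- Peirce component `R₂₂` relative to the idempotent `e`. -/
def peirce22 {R : Type*} [NonUnitalNonAssocRing R] (e : R) : Set R :=
  {x | e * x = 0 ∧ x * e = 0}

/-- Condition (i): if `a₁₁ + a₂₂` commutes with every element of `R₁₂`, it is central. -/
def CondI {R : Type*} [NonUnitalNonAssocRing R] (e : R) : Prop :=
  ∀ a b : R, a ∈ peirce11 e → b ∈ peirce22 e →
    (∀ m ∈ peirce12 e, lieBr (a + b) m = 0) → a + b ∈ ringCenter R

/-- Condition (ii): if `a₁₁ + a₂₂` commutes with every element of `R₂₁`, it is central. -/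
def CondII {R : Type*} [NonUnitalNonAssocRing R] (e : R) : Prop :=
  ∀ a b : R, a ∈ peirce11 e → b ∈ peirce22 e →
    (∀ m ∈ peirce21 e, lieBr (a + b) m = 0) → a + b ∈ ringCenter R

/-- A map `φ` is Lie multiplicative if `φ [x,y] = [φ x, φ y]`. -/
def IsLieMultiplicative {R R' : Type*} [NonUnitalNonAssocRing R] [NonUnitalNonAssocRing R']
    (φ : R → R') : Prop :=
  ∀ x y : R, φ (lieBr x y) = lieBr (φ x) (φ y)

/-- A map `D` is Lie triple derivable if
`D [[x,y],z] = [[D x,y],z] + [[x,D y],z] + [[x,y],D z]`. -/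
def IsLieTripleDerivable {R : Type*} [NonUnitalNonAssocRing R] (D : R → R) : Prop :=
  ∀ x y z : R, D (lieBr (lieBr x y) z) =
    lieBr (lieBr (D x) y) z + lieBr (lieBr x (D y)) z + lieBr (lieBr x y) (D z)

/-- A map `D` is Lie derivable if `D [x,y] = [D x, y] + [x, D y]`. -/
def IsLieDerivable {R : Type*} [NonUnitalNonAssocRing R] (D : R → R) : Prop :=
  ∀ x y : R, D (lieBr x y) = lieBr (D x) y + lieBr x (D y)

/-- `I` is a two-sided ideal (as a set) of the not-necessarily-associative ring `R`. -/
def IsTwoSidedIdealSet {R : Type*} [NonUnitalNonAssocRing R] (I : Set R) : Prop :=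
  (0 : R) ∈ I ∧ (∀ a b : R, a ∈ I → b ∈ I → a + b ∈ I) ∧ (∀ a : R, a ∈ I → -a ∈ I) ∧
  (∀ r a : R, a ∈ I → r * a ∈ I ∧ a * r ∈ I)

/-- `R` is prime: for any two nonzero two-sided ideals `A`, `B`, some product `a*b` with
`a ∈ A`, `b ∈ B` is nonzero (i.e. `A·B ≠ 0`). -/
def IsPrimeRing (R : Type*) [NonUnitalNonAssocRing R] : Prop :=
  ∀ A B : Set R, IsTwoSidedIdealSet A → IsTwoSidedIdealSet B → A ≠ {0} → B ≠ {0} →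
    ∃ a ∈ A, ∃ b ∈ B, a * b ≠ 0

/-- `R` is 3-torsion free: `3x = 0` implies `x = 0`. -/
def ThreeTorsionFree (R : Type*) [NonUnitalNonAssocRing R] : Prop :=
  ∀ x : R, x + x + x = 0 → x = 0

section helpers
set_option linter.unusedSimpArgs false
variable {R : Type*} [NonUnitalNonAssocRing R]

/-- associator -/
def asc (x y z : R) : R := x * y * z - x * (y * z)

theorem asc_l (hR : IsAlternative R) (x y z : R) : asc x y z = - asc y x z := by
  have h1 := hR.1 (x + y) z
  have h2 := hR.1 x z
  have h3 := hR.1 y z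
  simp only [mul_add, add_mul] at h1
  unfold asc
  grind

theorem asc_r (hR : IsAlternative R) (x y z : R) : asc x y z = - asc x z y := by
  have h1 := hR.2 (y + z) x
  have h2 := hR.2 y x
  have h3 := hR.2 z x
  simp only [mul_add, add_mul] at h1
  unfold asc
  grind

theorem asc_c (hR : IsAlternative R) (x y z : R) : asc x y z = asc y z x := by
  rw [asc_l hR x y z, asc_r hR y x z, neg_neg]

section peirce
variable {e : R}

theorem pe_prod (hR : IsAlternative R) (x y : R) :
    e * (x * y) = e * x * y + x * e * y - x * (e * y) ∧
    x * y * e = x * (y * e) - x * e * y + x * (e * y) ∧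
    x * (e * y) - x * e * y = y * e * x - y * (e * x) := by
  have h1 := asc_l hR e x y
  have h2 := asc_r hR x y e
  have h3 := asc_c hR x e y
  have h4 := asc_l hR e y x
  have h5 := asc_c hR e y x
  unfold asc at *
  refine ⟨?_, ?_, ?_⟩ <;> grind

theorem p11_11 (hR : IsAlternative R) {x y : R} (hx : x ∈ peirce11 e) (hy : y ∈ peirce11 e) :
    x * y ∈ peirce11 e := by
  have h := pe_prod (e := e) hR x y
  simp only [peirce11, peirce12, peirce21, peirce22, Set.mem_ofPred_eq] at *
  simp only [hx.1, hx.2, hy.1, hy.2, mul_zero, zero_mul] at h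
  grind

theorem p22_22 (hR : IsAlternative R) {x y : R} (hx : x ∈ peirce22 e) (hy : y ∈ peirce22 e) :
    x * y ∈ peirce22 e := by
  have h := pe_prod (e := e) hR x y
  simp only [peirce11, peirce12, peirce21, peirce22, Set.mem_ofPred_eq] at *
  simp only [hx.1, hx.2, hy.1, hy.2, mul_zero, zero_mul] at h
  grind

theorem p11_12 (hR : IsAlternative R) {x y : R} (hx : x ∈ peirce11 e) (hy : y ∈ peirce12 e) :
    x * y ∈ peirce12 e ∧ y * x = 0 := by
  have h := pe_prod (e := e) hR x y
  have h' := pe_prod (e := e) hR y x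
  simp only [peirce11, peirce12, peirce21, peirce22, Set.mem_ofPred_eq] at *
  simp only [hx.1, hx.2, hy.1, hy.2, mul_zero, zero_mul] at h h'
  grind

theorem p11_21 (hR : IsAlternative R) {x y : R} (hx : x ∈ peirce11 e) (hy : y ∈ peirce21 e) :
    y * x ∈ peirce21 e ∧ x * y = 0 := by
  have h := pe_prod (e := e) hR x y
  have h' := pe_prod (e := e) hR y x
  simp only [peirce11, peirce12, peirce21, peirce22, Set.mem_ofPred_eq] at *
  simp only [hx.1, hx.2, hy.1, hy.2, mul_zero, zero_mul] at h h'
  grind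

theorem p22_12 (hR : IsAlternative R) {x y : R} (hx : x ∈ peirce22 e) (hy : y ∈ peirce12 e) :
    y * x ∈ peirce12 e ∧ x * y = 0 := by
  have h := pe_prod (e := e) hR x y
  have h' := pe_prod (e := e) hR y x
  simp only [peirce11, peirce12, peirce21, peirce22, Set.mem_ofPred_eq] at *
  simp only [hx.1, hx.2, hy.1, hy.2, mul_zero, zero_mul] at h h'
  grind

theorem p22_21 (hR : IsAlternative R) {x y : R} (hx : x ∈ peirce22 e) (hy : y ∈ peirce21 e) :
    x * y ∈ peirce21 e ∧ y * x = 0 := by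
  have h := pe_prod (e := e) hR x y
  have h' := pe_prod (e := e) hR y x
  simp only [peirce11, peirce12, peirce21, peirce22, Set.mem_ofPred_eq] at *
  simp only [hx.1, hx.2, hy.1, hy.2, mul_zero, zero_mul] at h h'
  grind

theorem p12_21 (hR : IsAlternative R) {x y : R} (hx : x ∈ peirce12 e) (hy : y ∈ peirce21 e) :
    x * y ∈ peirce11 e ∧ y * x ∈ peirce22 e := by
  have h := pe_prod (e := e) hR x y
  have h' := pe_prod (e := e) hR y x
  simp only [peirce11, peirce12, peirce21, peirce22, Set.mem_ofPred_eq] at *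
  simp only [hx.1, hx.2, hy.1, hy.2, mul_zero, zero_mul] at h h'
  grind

theorem p12_12 (hR : IsAlternative R) {x y : R} (hx : x ∈ peirce12 e) (hy : y ∈ peirce12 e) :
    x * y ∈ peirce21 e := by
  have h := pe_prod (e := e) hR x y
  have h' := pe_prod (e := e) hR y x
  simp only [peirce11, peirce12, peirce21, peirce22, Set.mem_ofPred_eq] at *
  simp only [hx.1, hx.2, hy.1, hy.2, mul_zero, zero_mul] at h h'
  grind

theorem p21_21 (hR : IsAlternative R) {x y : R} (hx : x ∈ peirce21 e) (hy : y ∈ peirce21 e) :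
    x * y ∈ peirce12 e := by
  have h := pe_prod (e := e) hR x y
  have h' := pe_prod (e := e) hR y x
  simp only [peirce11, peirce12, peirce21, peirce22, Set.mem_ofPred_eq] at *
  simp only [hx.1, hx.2, hy.1, hy.2, mul_zero, zero_mul] at h h'
  grind

theorem p11_22 (hR : IsAlternative R) (he : e * e = e) {x y : R}
    (hx : x ∈ peirce11 e) (hy : y ∈ peirce22 e) :
    x * y = 0 ∧ y * x = 0 := by
  have h := pe_prod (e := e) hR x y
  have h' := pe_prod (e := e) hR y x
  have h2 := hR.2 e (x * y)
  have h1 : (e * e) * (x * y) = e * (e * (x * y)) := hR.1 e (x * y)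
  simp only [peirce11, peirce12, peirce21, peirce22, Set.mem_ofPred_eq] at *
  simp only [hx.1, hx.2, hy.1, hy.2, mul_zero, zero_mul] at h h'
  have h3 : x * y = y * x := by grind
  obtain ⟨ha, -, -⟩ := h
  obtain ⟨hb, -, -⟩ := h'
  rw [← h3] at hb
  have hb' : e * (x * y) = -(x * y) := by rw [hb]; abel
  rw [he, hb', mul_neg, hb'] at h1
  have : x * y = 0 := by
    rw [neg_neg] at h1
    rw [hb', h1, sub_zero] at ha
    exact left_eq_add.1 ha
  rw [← h3]; exact ⟨this, this⟩

def Dg (e x : R) : Prop := ∃ a ∈ peirce11 e, ∃ b ∈ peirce22 e, x = a + b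
def Od (e x : R) : Prop := ∃ a ∈ peirce12 e, ∃ b ∈ peirce21 e, x = a + b

theorem add11 {x y : R} (hx : x ∈ peirce11 e) (hy : y ∈ peirce11 e) : x + y ∈ peirce11 e := by
  simp only [peirce11, Set.mem_ofPred_eq, mul_add, add_mul] at *; grind
theorem add12 {x y : R} (hx : x ∈ peirce12 e) (hy : y ∈ peirce12 e) : x + y ∈ peirce12 e := by
  simp only [peirce12, Set.mem_ofPred_eq, mul_add, add_mul] at *; grind
theorem add21 {x y : R} (hx : x ∈ peirce21 e) (hy : y ∈ peirce21 e) : x + y ∈ peirce21 e := by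
  simp only [peirce21, Set.mem_ofPred_eq, mul_add, add_mul] at *; grind
theorem add22 {x y : R} (hx : x ∈ peirce22 e) (hy : y ∈ peirce22 e) : x + y ∈ peirce22 e := by
  simp only [peirce22, Set.mem_ofPred_eq, mul_add, add_mul] at *; grind
theorem neg11 {x : R} (hx : x ∈ peirce11 e) : -x ∈ peirce11 e := by
  simp only [peirce11, Set.mem_ofPred_eq, mul_neg, neg_mul] at *; grind
theorem neg12 {x : R} (hx : x ∈ peirce12 e) : -x ∈ peirce12 e := by
  simp only [peirce12, Set.mem_ofPred_eq, mul_neg, neg_mul] at *; grind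
theorem neg21 {x : R} (hx : x ∈ peirce21 e) : -x ∈ peirce21 e := by
  simp only [peirce21, Set.mem_ofPred_eq, mul_neg, neg_mul] at *; grind
theorem neg22 {x : R} (hx : x ∈ peirce22 e) : -x ∈ peirce22 e := by
  simp only [peirce22, Set.mem_ofPred_eq, mul_neg, neg_mul] at *; grind
theorem z11 : (0:R) ∈ peirce11 e := by simp [peirce11]
theorem z12 : (0:R) ∈ peirce12 e := by simp [peirce12]
theorem z21 : (0:R) ∈ peirce21 e := by simp [peirce21]
theorem z22 : (0:R) ∈ peirce22 e := by simp [peirce22]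

theorem Dg.add {x y : R} (hx : Dg e x) (hy : Dg e y) : Dg e (x + y) := by
  obtain ⟨a, ha, b, hb, rfl⟩ := hx
  obtain ⟨c, hc, d, hd, rfl⟩ := hy
  exact ⟨a + c, add11 ha hc, b + d, add22 hb hd, by abel⟩
theorem Dg.neg {x : R} (hx : Dg e x) : Dg e (-x) := by
  obtain ⟨a, ha, b, hb, rfl⟩ := hx
  exact ⟨-a, neg11 ha, -b, neg22 hb, by abel⟩
theorem Dg.sub {x y : R} (hx : Dg e x) (hy : Dg e y) : Dg e (x - y) := by
  rw [sub_eq_add_neg]; exact hx.add hy.neg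
theorem Od.add {x y : R} (hx : Od e x) (hy : Od e y) : Od e (x + y) := by
  obtain ⟨a, ha, b, hb, rfl⟩ := hx
  obtain ⟨c, hc, d, hd, rfl⟩ := hy
  exact ⟨a + c, add12 ha hc, b + d, add21 hb hd, by abel⟩
theorem Od.neg {x : R} (hx : Od e x) : Od e (-x) := by
  obtain ⟨a, ha, b, hb, rfl⟩ := hx
  exact ⟨-a, neg12 ha, -b, neg21 hb, by abel⟩
theorem Od.sub {x y : R} (hx : Od e x) (hy : Od e y) : Od e (x - y) := by
  rw [sub_eq_add_neg]; exact hx.add hy.neg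
theorem od12 {x : R} (hx : x ∈ peirce12 e) : Od e x := ⟨x, hx, 0, z21, by simp⟩
theorem od21 {x : R} (hx : x ∈ peirce21 e) : Od e x := ⟨0, z12, x, hx, by simp⟩
theorem dg11 {x : R} (hx : x ∈ peirce11 e) : Dg e x := ⟨x, hx, 0, z22, by simp⟩
theorem dg22 {x : R} (hx : x ∈ peirce22 e) : Dg e x := ⟨0, z11, x, hx, by simp⟩

theorem Dg.mul (hR : IsAlternative R) (he : e * e = e) {x y : R} (hx : Dg e x) (hy : Dg e y) : Dg e (x * y) := by
  obtain ⟨a, ha, b, hb, rfl⟩ := hx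
  obtain ⟨c, hc, d, hd, rfl⟩ := hy
  refine ⟨a * c, p11_11 hR ha hc, b * d, p22_22 hR hb hd, ?_⟩
  simp [mul_add, add_mul, (p11_22 hR he ha hd).1, (p11_22 hR he hc hb).2]

theorem dg_mul_od (hR : IsAlternative R) {x y : R} (hx : Dg e x) (hy : Od e y) :
    Od e (x * y) := by
  obtain ⟨a, ha, b, hb, rfl⟩ := hx
  obtain ⟨c, hc, d, hd, rfl⟩ := hy
  refine ⟨a * c, (p11_12 hR ha hc).1, b * d, (p22_21 hR hb hd).1, ?_⟩
  simp [mul_add, add_mul, (p11_21 hR ha hd).2, (p22_12 hR hb hc).2]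

theorem od_mul_dg (hR : IsAlternative R) {x y : R} (hx : Dg e x) (hy : Od e y) :
    Od e (y * x) := by
  obtain ⟨a, ha, b, hb, rfl⟩ := hx
  obtain ⟨c, hc, d, hd, rfl⟩ := hy
  refine ⟨c * b, (p22_12 hR hb hc).1, d * a, (p11_21 hR ha hd).1, ?_⟩
  simp [mul_add, add_mul, (p11_12 hR ha hc).2, (p22_21 hR hb hd).2, add_comm]

theorem asc_ddm (hR : IsAlternative R) (he : e * e = e) {x y m : R} (hx : Dg e x) (hy : Dg e y) (hm : Od e m) :
    asc x y m = 0 := by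
  obtain ⟨a, ha, b, hb, rfl⟩ := hx
  obtain ⟨c, hc, d, hd, rfl⟩ := hy
  obtain ⟨m, hm, n, hn, rfl⟩ := hm
  have hadd1 : ∀ x x' y z : R, asc (x + x') y z = asc x y z + asc x' y z := by
    intros; simp only [asc, add_mul]; abel
  have hadd2 : ∀ x x' y z : R, asc y (x + x') z = asc y x z + asc y x' z := by
    intros; simp only [asc, add_mul, mul_add]; abel
  have hadd3 : ∀ x x' y z : R, asc y z (x + x') = asc y z x + asc y z x' := by
    intros; simp only [asc, mul_add]; abel
  have e1 : asc a c m = 0 := by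
    rw [← asc_c hR]
    simp [asc, (p11_12 hR ha hm).2, (p11_12 hR (p11_11 hR ha hc) hm).2]
  have e2 : asc a c n = 0 := by
    simp [asc, (p11_21 hR hc hn).2, (p11_21 hR (p11_11 hR ha hc) hn).2]
  have e3 : asc a d m = 0 := by
    simp [asc, (p11_22 hR he ha hd).1, (p22_12 hR hd hm).2]
  have e4 : asc a d n = 0 := by
    simp [asc, (p11_22 hR he ha hd).1, (p11_21 hR ha (p22_21 hR hd hn).1).2]
  have e5 : asc b c m = 0 := by
    simp [asc, (p11_22 hR he hc hb).2, (p22_12 hR hb (p11_12 hR hc hm).1).2]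
  have e6 : asc b c n = 0 := by
    simp [asc, (p11_22 hR he hc hb).2, (p11_21 hR hc hn).2]
  have e7 : asc b d m = 0 := by
    simp [asc, (p22_12 hR hd hm).2, (p22_12 hR (p22_22 hR hb hd) hm).2]
  have e8 : asc b d n = 0 := by
    rw [← asc_c hR]
    simp [asc, (p22_21 hR hb hn).2, (p22_21 hR (p22_22 hR hb hd) hn).2]
  simp [hadd1, hadd2, hadd3, e1, e2, e3, e4, e5, e6, e7, e8]

theorem decomp (hR : IsAlternative R) (he : e * e = e) (x : R) :
    ∃ d m, Dg e d ∧ Od e m ∧ x = d + m := by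
  have h1 : ∀ y, e * (e * y) = e * y := fun y => by rw [← hR.1, he]
  have h2 : ∀ y, y * e * e = y * e := fun y => by rw [hR.2, he]
  have h3 : ∀ y, e * y * e = e * (y * e) := fun y => by
    have := asc_l hR e y e
    have h := hR.2 e y
    unfold asc at this
    grind
  refine ⟨e * (x * e) + (x - e * x - x * e + e * (x * e)),
    (e * x - e * (x * e)) + (x * e - e * (x * e)),
    ⟨_, ?_, _, ?_, rfl⟩, ⟨_, ?_, _, ?_, rfl⟩, by abel⟩ <;>
  simp only [peirce11, peirce12, peirce21, peirce22, Set.mem_ofPred_eq, mul_add, mul_sub, add_mul,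
    sub_mul, h1, h2, h3] <;> constructor <;> first | rfl | abel | simp

theorem Od.br_br {m : R} (hm : Od e m) : lieBr (lieBr m e) e = m := by
  obtain ⟨a, ⟨ha, ha'⟩, b, ⟨hb, hb'⟩, rfl⟩ := hm
  simp [lieBr, mul_add, add_mul, mul_sub, sub_mul, ha, ha', hb, hb', add_comm]

theorem Dg.br {m : R} (hm : Dg e m) : lieBr m e = 0 := by
  obtain ⟨a, ⟨ha, ha'⟩, b, ⟨hb, hb'⟩, rfl⟩ := hm
  simp [lieBr, mul_add, add_mul, ha, ha', hb, hb']

theorem br_zero_left (y : R) : lieBr 0 y = 0 := by simp [lieBr]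
theorem br_add_left (x y z : R) : lieBr (x + y) z = lieBr x z + lieBr y z := by
  simp only [lieBr, mul_add, add_mul]; abel
theorem br_add_right (x y z : R) : lieBr z (x + y) = lieBr z x + lieBr z y := by
  simp only [lieBr, mul_add, add_mul]; abel
theorem br_zero_right (y : R) : lieBr y 0 = 0 := by simp [lieBr]

theorem Od.eq_br {m : R} (hm : Od e m) : ∃ n, lieBr e n = m := by
  obtain ⟨a, ⟨ha, ha'⟩, b, ⟨hb, hb'⟩, rfl⟩ := hm
  exact ⟨a - b, by simp [lieBr, mul_sub, sub_mul, ha, ha', hb, hb']⟩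

theorem dg_of_br_br (hR : IsAlternative R) (he : e * e = e) {x : R}
    (h : lieBr (lieBr x e) e = 0) : Dg e x := by
  obtain ⟨d, m, hd, hm, rfl⟩ := decomp hR he x
  rw [br_add_left, br_add_left, hd.br, hm.br_br, br_zero_left, zero_add] at h
  simpa [h] using hd

theorem od_of_br_br (hR : IsAlternative R) (he : e * e = e) {x : R}
    (h : lieBr (lieBr x e) e = x) : Od e x := by
  obtain ⟨d, m, hd, hm, rfl⟩ := decomp hR he x
  rw [br_add_left, br_add_left, hd.br, hm.br_br, br_zero_left, zero_add] at h
  rw [← h]; exact hm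

theorem dg_od_zero {x : R} (hd : Dg e x) (hm : Od e x) : x = 0 := by
  rw [← hm.br_br, hd.br, br_zero_left]

theorem br_od_dg (hR : IsAlternative R) {m d : R} (hm : Od e m) (hd : Dg e d) :
    Od e (lieBr m d) := (od_mul_dg hR hd hm).sub (dg_mul_od hR hd hm)

/-- defect of additivity -/
def dfc (D : R → R) (a b : R) : R := D (a + b) - D a - D b

section D
variable {D : R → R}

theorem D_zero (hD : IsLieTripleDerivable D) : D 0 = 0 := by
  have := hD 0 0 0
  simpa [lieBr] using this

theorem dfc_zl (hD : IsLieTripleDerivable D) (a : R) : dfc D 0 a = 0 := by simp [dfc, D_zero hD]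
theorem dfc_zr (hD : IsLieTripleDerivable D) (a : R) : dfc D a 0 = 0 := by simp [dfc, D_zero hD]

theorem dfc_l (hD : IsLieTripleDerivable D) (a b y z : R) :
    dfc D (lieBr (lieBr a y) z) (lieBr (lieBr b y) z) = lieBr (lieBr (dfc D a b) y) z := by
  have h1 := hD (a + b) y z
  have h2 := hD a y z
  have h3 := hD b y z
  unfold dfc
  rw [← br_add_left, ← br_add_left, h1, h2, h3]
  simp only [lieBr, mul_add, add_mul, mul_sub, sub_mul]
  abel

theorem dfc_r (hD : IsLieTripleDerivable D) (x y a b : R) :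
    dfc D (lieBr (lieBr x y) a) (lieBr (lieBr x y) b) = lieBr (lieBr x y) (dfc D a b) := by
  have h1 := hD x y (a + b)
  have h2 := hD x y a
  have h3 := hD x y b
  unfold dfc
  rw [← br_add_right, h1, h2, h3]
  simp only [lieBr, mul_add, add_mul, mul_sub, sub_mul]
  abel

theorem dfc_m (hD : IsLieTripleDerivable D) {m : R} (hm : Od e m) (a b : R) :
    lieBr m (dfc D a b) = dfc D (lieBr m a) (lieBr m b) := by
  obtain ⟨n, rfl⟩ := hm.eq_br
  rw [dfc_r hD]

theorem dfc_dg (hD : IsLieTripleDerivable D) (hR : IsAlternative R) (he : e * e = e) {a b : R} (ha : Dg e a) :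
    Dg e (dfc D a b) := by
  apply dg_of_br_br hR he
  rw [← dfc_l hD, ha.br, br_zero_left, dfc_zl hD]

theorem dfc_dg' (hD : IsLieTripleDerivable D) (hR : IsAlternative R) (he : e * e = e) {a b : R} (hb : Dg e b) :
    Dg e (dfc D a b) := by
  apply dg_of_br_br hR he
  rw [← dfc_l hD, hb.br, br_zero_left, dfc_zr hD]

theorem dfc_od (hD : IsLieTripleDerivable D) (hR : IsAlternative R) (he : e * e = e) {a b : R} (ha : Od e a) (hb : Od e b) :
    Od e (dfc D a b) := by
  apply od_of_br_br hR he
  rw [← dfc_l hD, ha.br_br, hb.br_br]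

theorem expand (hD : IsLieTripleDerivable D) (he : e * e = e) {a b : R} (ha : Od e a) (hb : Od e b) :
    D (a + -b + lieBr (lieBr a b) e) - D a - D (-b) - D (lieBr (lieBr a b) e)
      = lieBr (lieBr (dfc D e a) b) e + lieBr (lieBr a (dfc D e b)) e
        + (lieBr (lieBr (dfc D e a) e) e + lieBr (lieBr e (dfc D e b)) e) := by
  have k0 : lieBr (lieBr e e) e = 0 := by simp [lieBr]
  have k1 : lieBr (lieBr e b) e = - b := by
    have := hb.br_br
    simp only [lieBr, mul_sub, sub_mul] at *
    grind
  have k2 := ha.br_br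
  have h0 := hD (e + a) (e + b) e
  have h1 := hD e b e
  have h2 := hD a e e
  have h3 := hD a b e
  have h4 := hD e e e
  have k : lieBr (lieBr (e + a) (e + b)) e = a + -b + lieBr (lieBr a b) e := by
    simp only [br_add_left, br_add_right, k0, k1, k2]; abel
  rw [k] at h0
  rw [k1] at h1
  rw [k2] at h2
  rw [k0, D_zero hD] at h4
  have q1 : D (e + a) = D e + D a + dfc D e a := by unfold dfc; abel
  have q2 : D (e + b) = D e + D b + dfc D e b := by unfold dfc; abel
  rw [q1, q2] at h0
  simp only [br_add_left, br_add_right] at h0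
  rw [h0, h1, h3]
  have h4' := h4.symm
  rw [add_assoc, add_eq_zero_iff_eq_neg] at h4'
  grind

theorem sub_expand (hD : IsLieTripleDerivable D) (hR : IsAlternative R) (he : e * e = e) {a b : R}
    (ha : Od e a) (hb : Od e b) (h1 : lieBr b (dfc D e a) = 0) (h2 : lieBr a (dfc D e b) = 0) :
    D (a + -b + lieBr (lieBr a b) e) = D a + D (-b) + D (lieBr (lieBr a b) e) := by
  have hee : Dg e e := dg11 ⟨he, he⟩
  have h := expand hD he ha hb
  have n : ∀ x y : R, lieBr x y = - lieBr y x := by intros; simp [lieBr]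
  have z : ∀ x : R, Dg e x → lieBr (lieBr e x) e = 0 := by
    intro x hx
    rw [n e x, hx.br]; simp [lieBr]
  rw [n (dfc D e a) b, h1, h2, (dfc_dg hD hR he hee).br, z _ (dfc_dg hD hR he hee)] at h
  simp only [neg_zero, br_zero_left, add_zero] at h
  rw [sub_sub, sub_sub, sub_eq_zero] at h
  rw [h]; abel

theorem br_dg {m n : R} (hR : IsAlternative R) (hm : m ∈ peirce12 e) (hn : n ∈ peirce21 e) :
    Dg e (lieBr m n) ∧ Dg e (lieBr n m) :=
  ⟨(dg11 (p12_21 hR hm hn).1).sub (dg22 (p12_21 hR hm hn).2),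
   (dg22 (p12_21 hR hm hn).2).sub (dg11 (p12_21 hR hm hn).1)⟩

theorem add_12_21 (hD : IsLieTripleDerivable D) (hR : IsAlternative R) (he : e * e = e) {a b : R} (ha : a ∈ peirce12 e)
    (hb : b ∈ peirce21 e) : D (a + b) = D a + D b := by
  have hee : Dg e e := dg11 ⟨he, he⟩
  have hb' := neg21 hb
  have h := sub_expand hD hR he (od12 ha) (od21 hb') ?_ ?_
  · have : lieBr (lieBr a (-b)) e = 0 := (br_dg hR ha hb').1.br
    simpa [this, D_zero hD] using h
  · apply dg_od_zero (e := e)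
    · rw [dfc_m hD (od21 hb')]
      exact dfc_dg' hD hR he (br_dg hR ha hb').2
    · exact br_od_dg hR (od21 hb') (dfc_dg hD hR he hee)
  · apply dg_od_zero (e := e)
    · rw [dfc_m hD (od12 ha)]
      exact dfc_dg' hD hR he (br_dg hR ha hb').1
    · exact br_od_dg hR (od12 ha) (dfc_dg hD hR he hee)

theorem add_12_12 (hD : IsLieTripleDerivable D) (hR : IsAlternative R) (he : e * e = e) {a b : R} (ha : a ∈ peirce12 e)
    (hb : b ∈ peirce12 e) : D (a + b) = D a + D b := by
  have hee : Dg e e := dg11 ⟨he, he⟩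
  have key : ∀ x y, x ∈ peirce12 e → y ∈ peirce12 e → lieBr x (dfc D e y) = 0 := by
    intro x y hx hy
    rw [dfc_m hD (od12 hx)]
    have h1 : lieBr x e = -x := by simp [lieBr, hx.1, hx.2]
    have h2 : lieBr x y ∈ peirce21 e := by
      rw [lieBr, sub_eq_add_neg]
      exact add21 (p12_12 hR hx hy) (neg21 (p12_12 hR hy hx))
    unfold dfc
    rw [h1, add_12_21 hD hR he (neg12 hx) h2]; abel
  have hb' := neg12 hb
  have h := sub_expand hD hR he (od12 ha) (od12 hb') (key _ _ hb' ha) (key _ _ ha hb')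
  have h2 : lieBr (lieBr a (-b)) e ∈ peirce21 e := by
    have h2 : lieBr a (-b) ∈ peirce21 e := by
      rw [lieBr, sub_eq_add_neg]
      exact add21 (p12_12 hR ha hb') (neg21 (p12_12 hR hb' ha))
    have : lieBr (lieBr a (-b)) e = lieBr a (-b) := by rw [lieBr, h2.1, h2.2, sub_zero]
    rwa [this]
  rw [neg_neg, add_12_21 hD hR he (add12 ha hb) h2] at h
  exact add_right_cancel h

theorem add_21_21 (hD : IsLieTripleDerivable D) (hR : IsAlternative R) (he : e * e = e) {a b : R} (ha : a ∈ peirce21 e)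
    (hb : b ∈ peirce21 e) : D (a + b) = D a + D b := by
  have hee : Dg e e := dg11 ⟨he, he⟩
  have key : ∀ x y, x ∈ peirce21 e → y ∈ peirce21 e → lieBr x (dfc D e y) = 0 := by
    intro x y hx hy
    rw [dfc_m hD (od21 hx)]
    have h1 : lieBr x e = x := by simp [lieBr, hx.1, hx.2]
    have h2 : lieBr x y ∈ peirce12 e := by
      rw [lieBr, sub_eq_add_neg]
      exact add12 (p21_21 hR hx hy) (neg12 (p21_21 hR hy hx))
    unfold dfc
    rw [h1, add_comm, add_12_21 hD hR he h2 hx]; abel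
  have hb' := neg21 hb
  have h := sub_expand hD hR he (od21 ha) (od21 hb') (key _ _ hb' ha) (key _ _ ha hb')
  have h2 : lieBr (lieBr a (-b)) e ∈ peirce12 e := by
    have h2 : lieBr a (-b) ∈ peirce12 e := by
      rw [lieBr, sub_eq_add_neg]
      exact add12 (p21_21 hR ha hb') (neg12 (p21_21 hR hb' ha))
    have : lieBr (lieBr a (-b)) e = - lieBr a (-b) := by rw [lieBr, h2.1, h2.2, zero_sub]
    rw [this]; exact neg12 h2
  rw [neg_neg, add_comm, add_12_21 hD hR he h2 (add21 ha hb), add_comm] at h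
  exact add_right_cancel h

theorem add_od (hD : IsLieTripleDerivable D) (hR : IsAlternative R) (he : e * e = e) {a b : R} (ha : Od e a) (hb : Od e b) :
    dfc D a b = 0 := by
  obtain ⟨a, ha, a', ha', rfl⟩ := ha
  obtain ⟨b, hb, b', hb', rfl⟩ := hb
  have : a + a' + (b + b') = (a + b) + (a' + b') := by abel
  unfold dfc
  rw [this, add_12_21 hD hR he (add12 ha hb) (add21 ha' hb'), add_12_12 hD hR he ha hb,
    add_21_21 hD hR he ha' hb', add_12_21 hD hR he ha ha', add_12_21 hD hR he hb hb']
  abel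

theorem dfc_all_dg (hD : IsLieTripleDerivable D) (hR : IsAlternative R) (he : e * e = e) (a b : R) : Dg e (dfc D a b) := by
  apply dg_of_br_br hR he
  have k : ∀ x, Od e (lieBr (lieBr x e) e) := by
    intro x
    obtain ⟨d, m, hd, hm, rfl⟩ := decomp hR he x
    rwa [br_add_left, br_add_left, hd.br, hm.br_br, br_zero_left, zero_add]
  rw [← dfc_l hD, add_od hD hR he (k a) (k b)]

theorem dfc_comm_od (hD : IsLieTripleDerivable D) (hR : IsAlternative R) (he : e * e = e) (a b : R) {m : R} (hm : Od e m) :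
    lieBr m (dfc D a b) = 0 := by
  apply dg_od_zero (e := e)
  · rw [dfc_m hD hm]; exact dfc_all_dg hD hR he _ _
  · exact br_od_dg hR hm (dfc_all_dg hD hR he _ _)
end D

theorem exists_od (hR : IsAlternative R) (hprime : IsPrimeRing R)
    (he : IsNontrivialIdempotent e) : ∃ m, Od e m ∧ m ≠ 0 := by
  by_contra! hno
  have hd : ∀ x, Dg e x := by
    intro x
    obtain ⟨d, m, hd, hm, rfl⟩ := decomp hR he.1 x
    rw [hno m hm, add_zero]; exact hd
  have hA : IsTwoSidedIdealSet (peirce11 e) := by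
    refine ⟨z11, fun a b => add11, fun a => neg11, fun r a ha => ?_⟩
    obtain ⟨c, hc, d, hd, rfl⟩ := hd r
    rw [add_mul, mul_add, (p11_22 hR he.1 ha hd).1, (p11_22 hR he.1 ha hd).2, add_zero, add_zero]
    exact ⟨p11_11 hR hc ha, p11_11 hR ha hc⟩
  have hB : IsTwoSidedIdealSet (peirce22 e) := by
    refine ⟨z22, fun a b => add22, fun a => neg22, fun r a ha => ?_⟩
    obtain ⟨c, hc, d, hd, rfl⟩ := hd r
    rw [add_mul, mul_add, (p11_22 hR he.1 hc ha).1, (p11_22 hR he.1 hc ha).2, zero_add, zero_add]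
    exact ⟨p22_22 hR hd ha, p22_22 hR ha hd⟩
  have hA0 : peirce11 e ≠ {0} := by
    intro h
    have : e ∈ peirce11 e := ⟨he.1, he.1⟩
    rw [h] at this
    exact he.2.1 this
  have hB0 : peirce22 e ≠ {0} := by
    intro h
    apply he.2.2
    intro x
    obtain ⟨c, hc, d, hd, rfl⟩ := hd x
    rw [h] at hd
    rw [Set.mem_singleton_iff.1 hd, add_zero]
    exact hc
  obtain ⟨a, ha, b, hb, hab⟩ := hprime _ _ hA hB hA0 hB0
  exact hab (p11_22 hR he.1 ha hb).1

theorem ker_zero (hR : IsAlternative R) (hprime : IsPrimeRing R)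
    (he : IsNontrivialIdempotent e) {c : R} (hc : Dg e c)
    (h : ∀ m, Od e m → c * m = 0 ∧ m * c = 0) : c = 0 := by
  set K : Set R := {c | Dg e c ∧ ∀ m, Od e m → c * m = 0 ∧ m * c = 0} with hK
  have hKI : IsTwoSidedIdealSet K := by
    refine ⟨⟨dg11 z11, by simp⟩, ?_, ?_, ?_⟩
    · rintro a b ⟨ha, ha'⟩ ⟨hb, hb'⟩
      refine ⟨ha.add hb, fun m hm => ?_⟩
      simp [add_mul, mul_add, ha' m hm, hb' m hm]
    · rintro a ⟨ha, ha'⟩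
      refine ⟨ha.neg, fun m hm => ?_⟩
      simp [ha' m hm]
    · rintro r a ⟨ha, ha'⟩
      obtain ⟨d, n, hd, hn, rfl⟩ := decomp hR he.1 r
      rw [add_mul, mul_add, (ha' n hn).1, (ha' n hn).2, add_zero, add_zero]
      refine ⟨⟨hd.mul hR he.1 ha, fun m hm => ?_⟩, ⟨ha.mul hR he.1 hd, fun m hm => ?_⟩⟩
      · have h1 := asc_ddm hR he.1 hd ha hm
        have h2 := asc_ddm hR he.1 hd ha hm
        rw [← asc_c hR] at h2
        unfold asc at h1 h2
        have h3 := ha' m hm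
        have h4 := ha' _ (od_mul_dg hR hd hm)
        rw [h3.1, mul_zero, sub_zero] at h1
        rw [h4.2, zero_sub, neg_eq_zero] at h2
        exact ⟨h1, h2⟩
      · have h1 := asc_ddm hR he.1 ha hd hm
        have h2 := asc_ddm hR he.1 ha hd hm
        rw [← asc_c hR] at h2
        unfold asc at h1 h2
        have h3 := ha' m hm
        have h4 := ha' _ (dg_mul_od hR hd hm)
        rw [h4.1, sub_zero] at h1
        rw [h3.2, zero_mul, zero_sub, neg_eq_zero] at h2
        exact ⟨h1, h2⟩
  set B : Set R := {x | ∀ c ∈ K, c * x = 0 ∧ x * c = 0} with hB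
  have hBI : IsTwoSidedIdealSet B := by
    refine ⟨by intro c _; simp, ?_, ?_, ?_⟩
    · intro a b ha hb c hc
      simp [add_mul, mul_add, ha c hc, hb c hc]
    · intro a ha c hc
      simp [ha c hc]
    · intro r x hx
      have key : ∀ c ∈ K, asc c r x = 0 := by
        intro c hc
        rw [← asc_c hR, asc, (hx c hc).2, (hx _ (hKI.2.2.2 r c hc).2).2, zero_mul, sub_zero]
      refine ⟨fun c hc => ⟨?_, ?_⟩, fun c hc => ⟨?_, ?_⟩⟩
      · have := key c hc
        rw [asc, (hx _ (hKI.2.2.2 r c hc).2).1, zero_sub, neg_eq_zero] at this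
        exact this
      · have := key c hc
        rw [asc_c hR, asc, (hx c hc).2, mul_zero, sub_zero] at this
        exact this
      · have := key c hc
        rw [asc_r hR, asc, (hx c hc).1, zero_mul, zero_sub, neg_neg] at this
        exact this
      · have := key c hc
        rw [← asc_c hR, asc_r hR, asc, (hx _ (hKI.2.2.2 r c hc).1).2, sub_zero,
          neg_eq_zero] at this
        exact this
  by_contra hc0
  obtain ⟨m, hm, hm0⟩ := exists_od hR hprime he
  obtain ⟨a, ha, b, hb, hab⟩ := hprime K B hKI hBI
    (fun h' => hc0 (by have : c ∈ K := ⟨hc, h⟩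
                       rw [h'] at this; exact this))
    (fun h' => hm0 (by have : m ∈ B := fun c hc => hc.2 m hm
                       rw [h'] at this; exact this))
  exact hab (hb a ha).1

theorem central_of (hR : IsAlternative R) (htf : ThreeTorsionFree R) (hprime : IsPrimeRing R)
    (he : IsNontrivialIdempotent e) {T : R} (hT : Dg e T)
    (h : ∀ m, Od e m → lieBr m T = 0) : T ∈ ringCenter R := by
  have h' : ∀ m, Od e m → m * T = T * m := fun m hm => sub_eq_zero.1 (h m hm)
  have hdd : ∀ d, Dg e d → T * d - d * T = 0 := by
    intro d hd
    apply ker_zero hR hprime he ((hT.mul hR he.1 hd).sub (hd.mul hR he.1 hT))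
    intro m hm
    have h1 := asc_ddm hR he.1 hT hd hm
    have h2 := asc_ddm hR he.1 hd hT hm
    have h3 := asc_ddm hR he.1 hd hT hm
    rw [asc_r hR] at h3
    have h4 := asc_ddm hR he.1 hT hd hm
    rw [← asc_c hR] at h4
    have h5 := asc_ddm hR he.1 hd hT hm
    rw [← asc_c hR] at h5
    have h6 := asc_ddm hR he.1 hT hd hm
    rw [asc_r hR] at h6
    have k1 := h' m hm
    have k2 := h' _ (dg_mul_od hR hd hm)
    have k3 := h' _ (od_mul_dg hR hd hm)
    unfold asc at *
    rw [k1] at h3 h4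
    rw [sub_mul, mul_sub]
    grind
  have hcom : ∀ x, T * x = x * T := by
    intro x
    obtain ⟨d, m, hd, hm, rfl⟩ := decomp hR he.1 x
    rw [mul_add, add_mul, h' m hm, sub_eq_zero.1 (hdd d hd)]
  have has : ∀ x y, asc x y T = 0 := by
    intro x y
    apply htf
    have h1 := asc_r hR x y T
    have h2 := asc_c hR T x y
    have k1 := hcom (x * y)
    have k2 := hcom x
    have k3 := hcom y
    have : asc x y T - asc x T y + asc T x y = 0 := by
      unfold asc
      rw [k1, k2, k3]; abel
    grind
  refine ⟨fun x y => ?_, fun x y => ?_, fun x y => ?_, hcom⟩ <;> rw [← sub_eq_zero]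
  · have := has x y
    rwa [← asc_c hR] at this
  · have := has x y
    rwa [asc_r hR, neg_eq_zero] at this
  · exact has x y

end peirce
end helpers

theorem prime_lieTripleDer_almost_additive
    {R : Type*} [NonUnitalNonAssocRing R]
    (hR : IsAlternative R) (htf : ThreeTorsionFree R) (hprime : IsPrimeRing R)
    (e : R) (he : IsNontrivialIdempotent e)
    (D : R → R) (hD : IsLieTripleDerivable D) :
    ∀ a b : R, ∃ z ∈ ringCenter R, D (a + b) = D a + D b + z := by
  intro a b
  refine ⟨dfc D a b, central_of hR htf hprime he (dfc_all_dg hD hR he.1 a b)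
    (fun m hm => dfc_comm_od hD hR he.1 a b hm), ?_⟩
  unfold dfc
  abel
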